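/- Let F := 1 − H⁶/48 + 3H⁷/70 − 197H⁸/4480. For a natural number m ≥ 1 set K_m := ( 1 − m(m³ + m² + m + 16)H⁶/6! + 3(2m⁵ + 2m⁴ + 2m³ + 37m² + 16m + 11)H⁷/7! − 21(m⁶ + m⁵ + m⁴ + 21m³ + 13m² + 17m + 9)H⁸/8! )^{m(m−1)}. Then for every d ∈ ℚ, 8!·(the coefficient of H⁸ in e(dH)·(K_m − F^{3m(m−1)}), computed modulo H⁹) = −m(m−1)·(21m⁶ − 48dm⁵ + 21m⁵ + 28d²m⁴ − 48dm⁴ + 21m⁴ + 28d²m³ − 48dm³ + 441m³ + 28d²m² − 888dm² + 273m² + 448d²m − 384dm + 357m − 1260d² + 4920d − 5130). (This is the computation of Example 4.2 of the paper: the correction to the predegree of a degree-d curve due to an ordinary m-fold point with smooth, non-linear, non-inflectional branches, which absorbs 3m(m−1) flexes.) -/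

import Mathlib

open Polynomial

/-- The truncated exponential `e(dH) = ∑_{i=0}^{8} dⁱHⁱ/i!` in `ℚ[H]`. -/
noncomputable def eH (d : ℚ) : Polynomial ℚ :=
  ∑ i ∈ Finset.range 9, C (d ^ i / (Nat.factorial i : ℚ)) * X ^ i

/-- The multiplicative contribution of one ordinary flex. -/
noncomputable def Fflex : Polynomial ℚ :=
  1 - C (1 / 48 : ℚ) * X ^ 6 + C (3 / 70 : ℚ) * X ^ 7 - C (197 / 4480 : ℚ) * X ^ 8

/-- The multiplicative contribution of an ordinary `m`-fold point with smooth, non-linear,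
non-inflectional branches (Example 4.2). -/
noncomputable def Km (m : ℕ) : Polynomial ℚ :=
  (1 - C ((m : ℚ) * ((m : ℚ) ^ 3 + (m : ℚ) ^ 2 + (m : ℚ) + 16) / 720) * X ^ 6
    + C (3 * (2 * (m : ℚ) ^ 5 + 2 * (m : ℚ) ^ 4 + 2 * (m : ℚ) ^ 3 + 37 * (m : ℚ) ^ 2
        + 16 * (m : ℚ) + 11) / 5040) * X ^ 7
    - C (21 * ((m : ℚ) ^ 6 + (m : ℚ) ^ 5 + (m : ℚ) ^ 4 + 21 * (m : ℚ) ^ 3 + 13 * (m : ℚ) ^ 2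
        + 17 * (m : ℚ) + 9) / 40320) * X ^ 8) ^ (m * (m - 1))

/-!
`Fflex` and the base of the power `Km m` are congruent to `1` modulo `X ^ 6`. Modulo `X ^ 12` such
factors multiply by adding their deviations from `1`, so up to degree `8` an `n`-th power only
scales the deviation by `n`, and the correction is linear in the coefficients of `X ^ 6`, `X ^ 7`
and `X ^ 8`.
-/

theorem coeff_mul_one_add_pow {R : Type*} [CommSemiring R] (f : R[X]) {p : R[X]} {k i : ℕ}
    (hp : X ^ k ∣ p) (hi : i < 2 * k) (n : ℕ) :
    (f * (1 + p) ^ n).coeff i = f.coeff i + n * (f * p).coeff i := by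
  obtain ⟨r, hr⟩ := powAddExpansion 1 p n
  have hdvd : X ^ (2 * k) ∣ f * (r * p ^ 2) := by
    rw [mul_comm 2 k, pow_mul]
    exact ((pow_dvd_pow_of_dvd hp 2).mul_left r).mul_left f
  have hexpand : f * (1 + p) ^ n = f + n * (f * p) + f * (r * p ^ 2) := by
    rw [hr]
    simp only [one_pow]
    ring
  rw [hexpand, coeff_add, coeff_add, coeff_natCast_mul, X_pow_dvd_iff.mp hdvd i hi, add_zero]

theorem coeff_mul_one_sub_add_sub_pow {R : Type*} [CommRing R] (f : R[X]) (a b c : R) {k : ℕ}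
    (hk : 2 < k) (n : ℕ) :
    (f * (1 - C a * X ^ k + C b * X ^ (k + 1) - C c * X ^ (k + 2)) ^ n).coeff (k + 2)
      = f.coeff (k + 2) + n * (b * f.coeff 1 - a * f.coeff 2 - c * f.coeff 0) := by
  set q : R[X] := C b * X - C a - C c * X ^ 2 with hq
  have hfactor : 1 - C a * X ^ k + C b * X ^ (k + 1) - C c * X ^ (k + 2) = 1 + q * X ^ k := by
    rw [hq]
    ring
  have hcoeff : (f * q).coeff 2 = b * f.coeff 1 - a * f.coeff 2 - c * f.coeff 0 := by
    have hexpand : f * q = C b * (f * X) - C a * f - C c * (f * X ^ 2) := by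
      rw [hq]
      ring
    simp only [hexpand, coeff_sub, coeff_C_mul, coeff_mul_X, coeff_mul_X_pow', le_refl, if_true,
      Nat.sub_self]
  rw [hfactor, coeff_mul_one_add_pow f (dvd_mul_left _ _) (by lia), ← mul_assoc, add_comm k 2,
    coeff_mul_X_pow, hcoeff]

theorem coeff_eH (d : ℚ) {i : ℕ} (hi : i < 9) :
    (eH d).coeff i = d ^ i / (Nat.factorial i : ℚ) := by
  simp [eH, coeff_X_pow, hi]

theorem coeff_eight_eH_mul_pow (d a b c : ℚ) (n : ℕ) :
    (eH d * (1 - C a * X ^ 6 + C b * X ^ 7 - C c * X ^ 8) ^ n).coeff 8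
      = d ^ 8 / (Nat.factorial 8 : ℚ) + n * (b * d - a * (d ^ 2 / 2) - c) := by
  rw [coeff_mul_one_sub_add_sub_pow (eH d) a b c (k := 6) (by norm_num) n]
  simp [coeff_eH]

/-- Example 4.2: the correction to the predegree of a degree-`d` curve due to an ordinary
`m`-fold point with smooth, non-linear, non-inflectional branches, which absorbs
`3m(m−1)` flexes. -/
theorem stmt_11 (m : ℕ) (hm : 1 ≤ m) (d : ℚ) :
    (Nat.factorial 8 : ℚ) * ((eH d * (Km m - Fflex ^ (3 * m * (m - 1)))).coeff 8)
    = -(m : ℚ) * ((m : ℚ) - 1) *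
        (21 * (m : ℚ) ^ 6 - 48 * d * (m : ℚ) ^ 5 + 21 * (m : ℚ) ^ 5
          + 28 * d ^ 2 * (m : ℚ) ^ 4 - 48 * d * (m : ℚ) ^ 4 + 21 * (m : ℚ) ^ 4
          + 28 * d ^ 2 * (m : ℚ) ^ 3 - 48 * d * (m : ℚ) ^ 3 + 441 * (m : ℚ) ^ 3
          + 28 * d ^ 2 * (m : ℚ) ^ 2 - 888 * d * (m : ℚ) ^ 2 + 273 * (m : ℚ) ^ 2
          + 448 * d ^ 2 * (m : ℚ) - 384 * d * (m : ℚ) + 357 * (m : ℚ)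
          - 1260 * d ^ 2 + 4920 * d - 5130) := by
  have hpred : ((m - 1 : ℕ) : ℚ) = m - 1 := Nat.cast_pred hm
  have hfactorial : (Nat.factorial 8 : ℚ) = 40320 := by norm_num [Nat.factorial]
  rw [mul_sub, coeff_sub, Km, Fflex, coeff_eight_eH_mul_pow, coeff_eight_eH_mul_pow, hfactorial]
  push_cast [hpred]
  ring
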